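/- arXiv:2204.01793 — 2 statements merged into one kernel-verified Lean document; each statement's English description precedes it below -/
import Mathlib

section
/- Let w be a graphon on a probability space and λ: ℕ → ℝ≥0 with λ(n) ≤ λ₀ n^{−(1+α)/2} for constants λ₀ ≥ 0, α > 0. Then for all β ∈ [0,1], ε > 0, n > λ₀^{2/α}, and G drawn from the w-random graph model on n vertices, Pr[|Z_G(λ(n), β) − E[Z_G(λ(n), β)]| ≥ ε E[Z_G(λ(n), β)]] ≤ λ₀² / ((n^α − λ₀²) ε²). -/
open MeasureTheory

/-- Adjacency in the `w`-random graph determined by the outcome `ω`: vertex locations `ω.1`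
and i.i.d. uniform `[0,1]` labels `ω.2` on ordered pairs; `i, j` are adjacent iff the label is
at most `w(x_i, x_j)`. -/
def edgeOccW {Xs : Type*} {n : ℕ} (w : Xs → Xs → ℝ)
    (ω : (Fin n → Xs) × (Fin n × Fin n → ℝ)) (i j : Fin n) : Prop :=
  (i < j ∧ ω.2 (i, j) ≤ w (ω.1 i) (ω.1 j)) ∨
  (j < i ∧ ω.2 (j, i) ≤ w (ω.1 j) (ω.1 i))

open Classical in
/-- Partition function `Z_G(λ, β)` (with `β₀ = 1`) of the random graph determined by `ω`:
`Σ_{σ : [n] → {0,1}} λ^{#σ⁻¹(1)} β^{#edges with both endpoints 1}`. -/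
noncomputable def Zrand {Xs : Type*} {n : ℕ} (w : Xs → Xs → ℝ) (lam beta : ℝ)
    (ω : (Fin n → Xs) × (Fin n × Fin n → ℝ)) : ℝ :=
  ∑ σ : Fin n → Bool,
    lam ^ (Finset.univ.filter fun v => σ v = true).card *
    beta ^ ((Finset.univ.filter fun q : Fin n × Fin n =>
        q.1 < q.2 ∧ σ q.1 = true ∧ σ q.2 = true ∧ edgeOccW w ω q.1 q.2).card)

open ProbabilityTheory
open scoped Finset

/-!
Summing over the set `S` of vertices of spin `1`, `Z = ∑ S, λ ^ #S * f S`, where `f S = β ^ e(S)`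
decreases in `S` and `f S`, `f T` are independent for disjoint `S`, `T`. Deleting the overlap,
`E[f S * f T] ≤ E[f (S \ T)] * E[f (T \ S)]`, and `(S, T) ↦ (S ∩ T, S \ T, T \ S)` is injective, so
`E[Z²] ≤ (∑ U, λ ^ (2 * #U)) * E[Z]² = (1 + λ²) ^ n * E[Z]²`. Since `n * λ² ≤ λ₀² / n ^ α < 1`, the
relative variance is at most `λ₀² / (n ^ α - λ₀²)`, and Chebyshev's inequality concludes.
-/

lemma sum_comp_le_sum_of_injective {ι κ M : Type*} [Fintype ι] [Fintype κ] [AddCommMonoid M]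
    [PartialOrder M] [IsOrderedAddMonoid M] {e : ι → κ} (he : Function.Injective e) {g : κ → M}
    (hg : ∀ k, 0 ≤ g k) : ∑ i, g (e i) ≤ ∑ k, g k :=
  (Finset.sum_map Finset.univ ⟨e, he⟩ g).symm.trans_le (Finset.sum_le_univ_sum_of_nonneg hg)

lemma injective_inf_sdiff_sdiff {α : Type*} [GeneralizedBooleanAlgebra α] :
    Function.Injective fun p : α × α => (p.1 ⊓ p.2, p.1 \ p.2, p.2 \ p.1) := by
  rintro ⟨x, y⟩ ⟨x', y'⟩ h
  obtain ⟨hinf, hleft, hright⟩ : x ⊓ y = x' ⊓ y' ∧ x \ y = x' \ y' ∧ y \ x = y' \ x' := by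
    simpa only [Prod.mk.injEq] using h
  rw [Prod.mk.injEq]
  constructor
  · rw [← sup_inf_sdiff x y, hinf, hleft, sup_inf_sdiff]
  · rw [← sup_inf_sdiff y x, inf_comm, hinf, hright, inf_comm, sup_inf_sdiff]

section SubsetPolynomial

variable {V : Type*} [Fintype V]

/-- The polynomial `∑ S, lam ^ #S * a S` in `lam` whose coefficients are given by a function `a` on
the subsets of `V`: the form taken by a partition function after summing over the set of vertices
of spin `1`. -/
noncomputable def subsetPoly (lam : ℝ) (a : Finset V → ℝ) : ℝ :=
  ∑ S, lam ^ #S * a S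

lemma apply_empty_le_subsetPoly {lam : ℝ} (hlam : 0 ≤ lam) {a : Finset V → ℝ}
    (ha : ∀ S, 0 ≤ a S) : a ∅ ≤ subsetPoly lam a := by
  have h := Finset.single_le_sum (f := fun S => lam ^ #S * a S)
    (fun S _ => mul_nonneg (pow_nonneg hlam _) (ha S)) (Finset.mem_univ ∅)
  simpa [subsetPoly] using h

lemma subsetPoly_sq (lam : ℝ) (a : Finset V → ℝ) :
    subsetPoly lam a ^ 2 = ∑ S, ∑ T, lam ^ #S * lam ^ #T * (a S * a T) := by
  simp only [subsetPoly, sq, Finset.sum_mul_sum, mul_mul_mul_comm]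

variable [DecidableEq V]

lemma sum_pow_card_mul_sdiff_le {lam : ℝ} (hlam : 0 ≤ lam) {a : Finset V → ℝ}
    (ha : ∀ S, 0 ≤ a S) :
    ∑ S, ∑ T, lam ^ #S * lam ^ #T * (a (S \ T) * a (T \ S)) ≤
      (1 + lam ^ 2) ^ Fintype.card V * subsetPoly lam a ^ 2 := by
  let g : Finset V × Finset V × Finset V → ℝ := fun p =>
    (lam ^ 2) ^ #p.1 * (lam ^ #p.2.1 * lam ^ #p.2.2 * (a p.2.1 * a p.2.2))
  have hg : ∀ p, 0 ≤ g p := fun p =>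
    mul_nonneg (by positivity) (mul_nonneg (by positivity) (mul_nonneg (ha _) (ha _)))
  have hsplit : ∀ S T : Finset V,
      lam ^ #S * lam ^ #T * (a (S \ T) * a (T \ S)) = g (S ∩ T, S \ T, T \ S) := by
    intro S T
    have hT : #(T \ S) + #(S ∩ T) = #T := by
      rw [Finset.inter_comm, Finset.card_sdiff_add_card_inter]
    simp only [g]
    rw [← Finset.card_sdiff_add_card_inter S T, ← hT]
    ring
  have hbinom : ∑ U : Finset V, (lam ^ 2) ^ #U = (1 + lam ^ 2) ^ Fintype.card V := by
    simpa [add_comm] using Fintype.sum_pow_mul_eq_add_pow V (lam ^ 2) 1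
  calc ∑ S, ∑ T, lam ^ #S * lam ^ #T * (a (S \ T) * a (T \ S))
      = ∑ p : Finset V × Finset V, g (p.1 ∩ p.2, p.1 \ p.2, p.2 \ p.1) := by
        simp only [hsplit, Fintype.sum_prod_type]
    _ ≤ ∑ p, g p := sum_comp_le_sum_of_injective injective_inf_sdiff_sdiff hg
    _ = (1 + lam ^ 2) ^ Fintype.card V * subsetPoly lam a ^ 2 := by
        rw [← hbinom, subsetPoly_sq, Finset.sum_mul]
        simp only [g, Fintype.sum_prod_type, Finset.mul_sum]

end SubsetPolynomial

section Independence

lemma indep_prod {Ω₁ Ω₂ : Type*} {m₁ m₁' mΩ₁ : MeasurableSpace Ω₁}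
    {m₂ m₂' mΩ₂ : MeasurableSpace Ω₂} {μ : Measure Ω₁} {ν : Measure Ω₂} [IsProbabilityMeasure μ]
    [IsProbabilityMeasure ν] (hm₁ : m₁ ≤ mΩ₁) (hm₁' : m₁' ≤ mΩ₁) (hm₂ : m₂ ≤ mΩ₂)
    (hm₂' : m₂' ≤ mΩ₂) (hμ : Indep m₁ m₁' μ) (hν : Indep m₂ m₂' ν) :
    Indep (m₁.prod m₂) (m₁'.prod m₂') (μ.prod ν) := by
  refine IndepSets.indep
    (sup_le_sup (MeasurableSpace.comap_mono hm₁) (MeasurableSpace.comap_mono hm₂))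
    (sup_le_sup (MeasurableSpace.comap_mono hm₁') (MeasurableSpace.comap_mono hm₂'))
    (@isPiSystem_prod _ _ m₁ m₂) (@isPiSystem_prod _ _ m₁' m₂')
    (@generateFrom_prod _ _ m₁ m₂).symm (@generateFrom_prod _ _ m₁' m₂').symm ?_
  rw [IndepSets_iff]
  rintro _ _ ⟨A, hA, B, hB, rfl⟩ ⟨A', hA', B', hB', rfl⟩
  rw [Set.prod_inter_prod, Measure.prod_prod, Measure.prod_prod, Measure.prod_prod,
    (Indep_iff _ _ _).1 hμ A A' hA hA', (Indep_iff _ _ _).1 hν B B' hB hB', mul_mul_mul_comm]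

lemma indep_cylinderEvents {ι : Type*} [Fintype ι] {X : ι → Type*} [∀ i, MeasurableSpace (X i)]
    (μ : ∀ i, Measure (X i)) [∀ i, IsProbabilityMeasure (μ i)] {A B : Set ι} (hAB : Disjoint A B) :
    Indep (cylinderEvents (X := X) A) (cylinderEvents B) (Measure.pi μ) :=
  indep_iSup_of_disjoint (fun i => (measurable_pi_apply i).comap_le)
    ((iIndepFun_iff_iIndep _ _ _).1 (iIndepFun_pi (X := fun _ x => x) fun _ => aemeasurable_id)) hAB

end Independence

section SecondMoment

variable {Ω : Type*} [MeasurableSpace Ω] {P : Measure Ω}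

lemma measure_abs_sub_integral_ge_le_of_integral_sq_le [IsProbabilityMeasure P] {X : Ω → ℝ}
    (hX : MemLp X 2 P) (hmean : 0 < ∫ ω, X ω ∂P) {c : ℝ}
    (hsq : ∫ ω, X ω ^ 2 ∂P ≤ (1 + c) * (∫ ω, X ω ∂P) ^ 2) {ε : ℝ} (hε : 0 < ε) :
    P {ω | ε * ∫ ω', X ω' ∂P ≤ |X ω - ∫ ω', X ω' ∂P|} ≤ ENNReal.ofReal (c / ε ^ 2) := by
  refine (meas_ge_le_variance_div_sq hX (mul_pos hε hmean)).trans (ENNReal.ofReal_le_ofReal ?_)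
  have hvar : Var[X; P] ≤ c * (∫ ω, X ω ∂P) ^ 2 := by
    rw [variance_eq_sub hX]
    simp only [Pi.pow_apply]
    linarith
  calc Var[X; P] / (ε * ∫ ω, X ω ∂P) ^ 2
      ≤ c * (∫ ω, X ω ∂P) ^ 2 / (ε * ∫ ω, X ω ∂P) ^ 2 := by gcongr
    _ = c / ε ^ 2 := by rw [mul_pow, mul_div_mul_right _ _ (by positivity)]

/-- A random weight `f S` attached to every set `S` of vertices, decreasing in `S` and independent
for disjoint sets. The example of interest is `β` to the number of edges of a random graph
inside `S`. -/
structure IsLocalWeight {V : Type*} (f : Finset V → Ω → ℝ) (P : Measure Ω) : Prop where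
  measurable : ∀ S, Measurable (f S)
  nonneg : ∀ S ω, 0 ≤ f S ω
  apply_empty : ∀ ω, f ∅ ω = 1
  anti : ∀ ⦃S T⦄, S ⊆ T → ∀ ω, f T ω ≤ f S ω
  indepFun : ∀ ⦃S T⦄, Disjoint S T → IndepFun (f S) (f T) P

namespace IsLocalWeight

variable {V : Type*} {f : Finset V → Ω → ℝ}

lemma le_one (hf : IsLocalWeight f P) (S : Finset V) (ω : Ω) : f S ω ≤ 1 :=
  (hf.anti S.empty_subset ω).trans_eq (hf.apply_empty ω)

lemma memLp_top [IsFiniteMeasure P] (hf : IsLocalWeight f P) (S : Finset V) : MemLp (f S) ⊤ P :=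
  MemLp.of_bound (hf.measurable S).aestronglyMeasurable 1 <| .of_forall fun ω => by
    rw [Real.norm_of_nonneg (hf.nonneg S ω)]
    exact hf.le_one S ω

lemma integrable [IsFiniteMeasure P] (hf : IsLocalWeight f P) (S : Finset V) :
    Integrable (f S) P :=
  (hf.memLp_top S).integrable le_top

lemma integrable_mul [IsFiniteMeasure P] (hf : IsLocalWeight f P) (S T : Finset V) :
    Integrable (fun ω => f S ω * f T ω) P :=
  (hf.integrable S).mul_of_top_left (hf.memLp_top T)

lemma integral_nonneg (hf : IsLocalWeight f P) (S : Finset V) : 0 ≤ ∫ ω, f S ω ∂P :=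
  MeasureTheory.integral_nonneg (hf.nonneg S)

lemma integral_mul_le [IsFiniteMeasure P] [DecidableEq V] (hf : IsLocalWeight f P)
    (S T : Finset V) :
    ∫ ω, f S ω * f T ω ∂P ≤ (∫ ω, f (S \ T) ω ∂P) * ∫ ω, f (T \ S) ω ∂P :=
  calc ∫ ω, f S ω * f T ω ∂P
      ≤ ∫ ω, f (S \ T) ω * f (T \ S) ω ∂P :=
        integral_mono (hf.integrable_mul _ _) (hf.integrable_mul _ _) fun ω =>
          mul_le_mul (hf.anti Finset.sdiff_subset ω) (hf.anti Finset.sdiff_subset ω)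
            (hf.nonneg _ ω) (hf.nonneg _ ω)
    _ = (∫ ω, f (S \ T) ω ∂P) * ∫ ω, f (T \ S) ω ∂P :=
        (hf.indepFun disjoint_sdiff_sdiff).integral_fun_mul_eq_mul_integral
          (hf.measurable _).aestronglyMeasurable (hf.measurable _).aestronglyMeasurable

variable [Fintype V] {lam : ℝ}

lemma memLp_subsetPoly [IsFiniteMeasure P] (hf : IsLocalWeight f P) (lam : ℝ) (p : ENNReal) :
    MemLp (fun ω => subsetPoly lam (f · ω)) p P :=
  memLp_finsetSum _ fun S _ => ((hf.memLp_top S).mono_exponent le_top).const_mul _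

lemma integral_subsetPoly [IsFiniteMeasure P] (hf : IsLocalWeight f P) (lam : ℝ) :
    ∫ ω, subsetPoly lam (f · ω) ∂P = subsetPoly lam fun S => ∫ ω, f S ω ∂P := by
  simp only [subsetPoly]
  rw [integral_finsetSum _ fun S _ => (hf.integrable S).const_mul _]
  simp only [integral_const_mul]

lemma one_le_integral_subsetPoly [IsProbabilityMeasure P] (hf : IsLocalWeight f P)
    (hlam : 0 ≤ lam) : 1 ≤ ∫ ω, subsetPoly lam (f · ω) ∂P := by
  have hempty : ∫ ω, f ∅ ω ∂P = 1 := by simp [hf.apply_empty]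
  rw [hf.integral_subsetPoly, ← hempty]
  exact apply_empty_le_subsetPoly hlam hf.integral_nonneg

lemma integral_subsetPoly_sq_le [IsFiniteMeasure P] (hf : IsLocalWeight f P) (hlam : 0 ≤ lam) :
    ∫ ω, subsetPoly lam (f · ω) ^ 2 ∂P ≤
      (1 + lam ^ 2) ^ Fintype.card V * (∫ ω, subsetPoly lam (f · ω) ∂P) ^ 2 := by
  classical
  have hint : ∀ S T, Integrable (fun ω => lam ^ #S * lam ^ #T * (f S ω * f T ω)) P :=
    fun S T => (hf.integrable_mul S T).const_mul _
  calc ∫ ω, subsetPoly lam (f · ω) ^ 2 ∂P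
      = ∑ S, ∑ T, lam ^ #S * lam ^ #T * ∫ ω, f S ω * f T ω ∂P := by
        simp only [subsetPoly_sq]
        rw [integral_finsetSum _ fun S _ => integrable_finsetSum _ fun T _ => hint S T]
        simp only [integral_finsetSum _ fun T _ => hint _ T, integral_const_mul]
    _ ≤ ∑ S, ∑ T, lam ^ #S * lam ^ #T * ((∫ ω, f (S \ T) ω ∂P) * ∫ ω, f (T \ S) ω ∂P) := by
        gcongr with S _ T _
        exact hf.integral_mul_le S T
    _ ≤ (1 + lam ^ 2) ^ Fintype.card V * (∫ ω, subsetPoly lam (f · ω) ∂P) ^ 2 := by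
        rw [hf.integral_subsetPoly]
        exact sum_pow_card_mul_sdiff_le hlam hf.integral_nonneg

theorem measure_abs_sub_integral_ge_le [IsProbabilityMeasure P]
    (hf : IsLocalWeight f P) (hlam : 0 ≤ lam) {ε : ℝ} (hε : 0 < ε) :
    P {ω | ε * ∫ ω', subsetPoly lam (f · ω') ∂P ≤
        |subsetPoly lam (f · ω) - ∫ ω', subsetPoly lam (f · ω') ∂P|} ≤
      ENNReal.ofReal (((1 + lam ^ 2) ^ Fintype.card V - 1) / ε ^ 2) := by
  refine measure_abs_sub_integral_ge_le_of_integral_sq_le (hf.memLp_subsetPoly lam 2)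
    (zero_lt_one.trans_le (hf.one_le_integral_subsetPoly hlam)) ?_ hε
  rw [add_sub_cancel]
  exact hf.integral_subsetPoly_sq_le hlam

end IsLocalWeight

end SecondMoment

section RandomGraph

variable {V X : Type*} [LinearOrder V] (w : X → X → ℝ)

/-- The edges of the `w`-random graph with both endpoints in `S`, each listed once as an increasing
pair. -/
noncomputable def edgesWithin (S : Finset V) (ω : (V → X) × (V × V → ℝ)) : Finset (V × V) :=
  {q ∈ S ×ˢ S | q.1 < q.2 ∧ ω.2 q ≤ w (ω.1 q.1) (ω.1 q.2)}

variable {w}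

lemma Zrand_eq_subsetPoly {n : ℕ} (lam beta : ℝ) (ω : (Fin n → X) × (Fin n × Fin n → ℝ)) :
    Zrand w lam beta ω = subsetPoly lam fun S => beta ^ #(edgesWithin w S ω) := by
  classical
  refine Finset.sum_nbij' (fun σ => Finset.univ.filter fun v => σ v = true)
    (fun S v => decide (v ∈ S)) (by simp) (by simp) (by simp) (by simp) fun σ _ => ?_
  refine congrArg (fun A : Finset (Fin n × Fin n) => lam ^ _ * beta ^ #A) (Finset.ext fun q => ?_)
  have hasymm : q.1 < q.2 → ¬q.2 < q.1 := lt_asymm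
  rw [Finset.mem_filter]
  simp only [edgesWithin, edgeOccW, Finset.mem_filter, Finset.mem_univ, Finset.mem_product,
    true_and]
  tauto

variable [MeasurableSpace X]

lemma measurable_card_edgesWithin (hw : Measurable (Function.uncurry w)) {Ω : Type*}
    [MeasurableSpace Ω] {S : Finset V} {x : Ω → V → X} {a : Ω → V × V → ℝ}
    (hx : ∀ i ∈ S, Measurable fun ω => x ω i) (ha : ∀ q ∈ S ×ˢ S, Measurable fun ω => a ω q) :
    Measurable fun ω => #(edgesWithin w S (x ω, a ω)) := by
  simp only [edgesWithin, Finset.card_filter]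
  refine Finset.measurable_fun_sum _ fun q hq => Measurable.ite ?_ measurable_const measurable_const
  obtain ⟨hq₁, hq₂⟩ := Finset.mem_product.1 hq
  exact (MeasurableSet.const _).inter
    (measurableSet_le (ha q hq) (hw.comp ((hx _ hq₁).prodMk (hx _ hq₂))))

lemma measurable_card_edgesWithin_cylinderEvents (hw : Measurable (Function.uncurry w))
    (S : Finset V) :
    Measurable[(cylinderEvents (X := fun _ : V => X) S).prod
      (cylinderEvents (X := fun _ : V × V => ℝ) ↑(S ×ˢ S))] fun ω => #(edgesWithin w S ω) := by
  let _ := cylinderEvents (X := fun _ : V => X) S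
  let _ := cylinderEvents (X := fun _ : V × V => ℝ) ↑(S ×ˢ S)
  exact measurable_card_edgesWithin hw
    (fun i hi => (measurable_cylinderEvent_apply (Finset.mem_coe.2 hi)).comp measurable_fst)
    (fun q hq => (measurable_cylinderEvent_apply (Finset.mem_coe.2 hq)).comp measurable_snd)

variable [Fintype V]

lemma indepFun_card_edgesWithin (hw : Measurable (Function.uncurry w)) (ξ : V → Measure X)
    [∀ i, IsProbabilityMeasure (ξ i)] (u : V × V → Measure ℝ) [∀ q, IsProbabilityMeasure (u q)]
    {S T : Finset V} (hST : Disjoint S T) :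
    IndepFun (fun ω => #(edgesWithin w S ω)) (fun ω => #(edgesWithin w T ω))
      ((Measure.pi ξ).prod (Measure.pi u)) := by
  have hpairs : Disjoint (S ×ˢ S) (T ×ˢ T) := Finset.disjoint_product.2 (Or.inl hST)
  have hindep := indep_prod cylinderEvents_le_pi cylinderEvents_le_pi cylinderEvents_le_pi
    cylinderEvents_le_pi (indep_cylinderEvents ξ (Finset.disjoint_coe.2 hST))
    (indep_cylinderEvents u (Finset.disjoint_coe.2 hpairs))
  exact (IndepFun_iff_Indep _ _ _).2 <| indep_of_indep_of_le hindep
    (measurable_card_edgesWithin_cylinderEvents hw S).comap_le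
    (measurable_card_edgesWithin_cylinderEvents hw T).comap_le

lemma isLocalWeight_pow_card_edgesWithin (hw : Measurable (Function.uncurry w))
    (ξ : V → Measure X) [∀ i, IsProbabilityMeasure (ξ i)]
    (u : V × V → Measure ℝ) [∀ q, IsProbabilityMeasure (u q)]
    {beta : ℝ} (hbeta0 : 0 ≤ beta) (hbeta1 : beta ≤ 1) :
    IsLocalWeight (fun (S : Finset V) ω => beta ^ #(edgesWithin w S ω))
      ((Measure.pi ξ).prod (Measure.pi u)) where
  measurable S := (measurable_of_countable (beta ^ ·)).comp <| measurable_card_edgesWithin hw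
    (fun i _ => (measurable_pi_apply i).comp measurable_fst)
    (fun q _ => (measurable_pi_apply q).comp measurable_snd)
  nonneg _ _ := pow_nonneg hbeta0 _
  apply_empty _ := by simp [edgesWithin]
  anti _ _ hST _ := pow_le_pow_of_le_one hbeta0 hbeta1 <| Finset.card_le_card <|
    Finset.filter_subset_filter _ (Finset.product_subset_product hST hST)
  indepFun _ _ hST := (indepFun_card_edgesWithin hw ξ u hST).comp
    (measurable_of_countable (beta ^ ·)) (measurable_of_countable (beta ^ ·))

end RandomGraph

section Asymptotics

lemma one_add_pow_sub_one_le {t x : ℝ} (ht : 0 ≤ t) {n : ℕ} (hx : n * t ≤ x) (hx1 : x < 1) :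
    (1 + t) ^ n - 1 ≤ x / (1 - x) := by
  have hx0 : 0 ≤ x := le_trans (by positivity) hx
  have hpow : (1 + t) ^ n ≤ 1 / (1 - x) :=
    calc (1 + t) ^ n ≤ Real.exp t ^ n := by
          gcongr
          rw [add_comm]
          exact Real.add_one_le_exp t
      _ = Real.exp (n * t) := (Real.exp_nat_mul t n).symm
      _ ≤ Real.exp x := Real.exp_le_exp.2 hx
      _ ≤ 1 / (1 - x) := Real.exp_bound_div_one_sub_of_interval hx0 hx1
  calc (1 + t) ^ n - 1 ≤ 1 / (1 - x) - 1 := by gcongr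
    _ = x / (1 - x) := by
      have : 1 - x ≠ 0 := by linarith
      field_simp
      ring

lemma mul_sq_le_sq_div_rpow {lam lam₀ α y : ℝ} (hlam : 0 ≤ lam) (hy : 0 < y)
    (hbound : lam ≤ lam₀ * y ^ (-(1 + α) / 2)) : y * lam ^ 2 ≤ lam₀ ^ 2 / y ^ α := by
  have hsq : (y ^ (-(1 + α) / 2)) ^ 2 = (y * y ^ α)⁻¹ := by
    rw [← Real.rpow_mul_natCast hy.le, Nat.cast_two, div_mul_cancel₀ _ two_ne_zero,
      Real.rpow_neg hy.le, Real.rpow_add hy, Real.rpow_one]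
  calc y * lam ^ 2 ≤ y * (lam₀ * y ^ (-(1 + α) / 2)) ^ 2 := by gcongr
    _ = lam₀ ^ 2 / y ^ α := by
      rw [mul_pow, hsq]
      field_simp

lemma sq_lt_rpow_of_rpow_two_div_lt {lam₀ α y : ℝ} (hlam₀ : 0 ≤ lam₀) (hα : 0 < α)
    (hy : lam₀ ^ (2 / α) < y) : lam₀ ^ 2 < y ^ α := by
  have h := Real.rpow_lt_rpow (Real.rpow_nonneg hlam₀ _) hy hα
  rwa [← Real.rpow_mul hlam₀, div_mul_cancel₀ _ hα.ne', Real.rpow_two] at h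

lemma one_add_sq_pow_sub_one_le {lam lam₀ α : ℝ} (hlam : 0 ≤ lam) (hlam₀ : 0 ≤ lam₀) (hα : 0 < α)
    {n : ℕ} (hbound : lam ≤ lam₀ * (n : ℝ) ^ (-(1 + α) / 2)) (hn : lam₀ ^ (2 / α) < (n : ℝ)) :
    (1 + lam ^ 2) ^ n - 1 ≤ lam₀ ^ 2 / ((n : ℝ) ^ α - lam₀ ^ 2) := by
  have hn0 : (0 : ℝ) < n := (Real.rpow_nonneg hlam₀ _).trans_lt hn
  have hnα : 0 < (n : ℝ) ^ α := Real.rpow_pos_of_pos hn0 α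
  have hlt : lam₀ ^ 2 / (n : ℝ) ^ α < 1 :=
    (div_lt_one hnα).2 (sq_lt_rpow_of_rpow_two_div_lt hlam₀ hα hn)
  calc (1 + lam ^ 2) ^ n - 1
      ≤ lam₀ ^ 2 / (n : ℝ) ^ α / (1 - lam₀ ^ 2 / (n : ℝ) ^ α) :=
        one_add_pow_sub_one_le (sq_nonneg lam) (mul_sq_le_sq_div_rpow hlam hn0 hbound) hlt
    _ = lam₀ ^ 2 / ((n : ℝ) ^ α - lam₀ ^ 2) := by
        rw [one_sub_div hnα.ne', div_div_div_cancel_right₀ hnα.ne']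

end Asymptotics

theorem Zrand_concentration_general {Xs : Type*} [MeasurableSpace Xs]
    (w : Xs → Xs → ℝ) (hw : Measurable (Function.uncurry w)) {n : ℕ}
    (ξ : Fin n → Measure Xs) [∀ i, IsProbabilityMeasure (ξ i)]
    (u : Fin n × Fin n → Measure ℝ) [∀ q, IsProbabilityMeasure (u q)]
    {lam lam₀ α : ℝ} (hlam : 0 ≤ lam) (hlam₀ : 0 ≤ lam₀) (hα : 0 < α)
    (hbound : lam ≤ lam₀ * (n : ℝ) ^ (-(1 + α) / 2)) (hn : lam₀ ^ (2 / α) < (n : ℝ))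
    {beta : ℝ} (hbeta0 : 0 ≤ beta) (hbeta1 : beta ≤ 1) {ε : ℝ} (hε : 0 < ε) :
    ((Measure.pi ξ).prod (Measure.pi u))
      {ω | ε * (∫ ω', Zrand w lam beta ω' ∂((Measure.pi ξ).prod (Measure.pi u)))
            ≤ |Zrand w lam beta ω
                - ∫ ω', Zrand w lam beta ω' ∂((Measure.pi ξ).prod (Measure.pi u))|}
      ≤ ENNReal.ofReal (lam₀ ^ 2 / (((n : ℝ) ^ α - lam₀ ^ 2) * ε ^ 2)) := by
  have hweight := isLocalWeight_pow_card_edgesWithin hw ξ u hbeta0 hbeta1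
  have hgrowth := one_add_sq_pow_sub_one_le hlam hlam₀ hα hbound hn
  simp only [Zrand_eq_subsetPoly]
  refine (hweight.measure_abs_sub_integral_ge_le hlam hε).trans
    (ENNReal.ofReal_le_ofReal ?_)
  rw [Fintype.card_fin, ← div_div]
  gcongr

/-- Concentration of antiferromagnetic partition functions on graphon-based random graphs:
if `λ(n) ≤ λ₀ n^{−(1+α)/2}`, then for `n > λ₀^{2/α}` the partition function of the
`w`-random graph on `n` vertices deviates from its mean by a relative `ε` with probability at
most `λ₀² / ((n^α − λ₀²) ε²)`. -/
theorem Zrand_concentration {Xs : Type*} [MeasurableSpace Xs]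
    (ξ : Measure Xs) [IsProbabilityMeasure ξ]
    (w : Xs → Xs → ℝ) (hw : Measurable (Function.uncurry w))
    (hw0 : ∀ x y, 0 ≤ w x y) (hw1 : ∀ x y, w x y ≤ 1) (hwsym : ∀ x y, w x y = w y x)
    (u : Measure ℝ) [IsProbabilityMeasure u] (hu : u = volume.restrict (Set.Icc (0:ℝ) 1))
    (lamF : ℕ → ℝ) (hlamF : ∀ m, 0 ≤ lamF m)
    (lam₀ α : ℝ) (hlam₀ : 0 ≤ lam₀) (hα : 0 < α)
    (hbound : ∀ m : ℕ, lamF m ≤ lam₀ * (m : ℝ) ^ (-(1 + α) / 2))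
    (beta : ℝ) (hbeta0 : 0 ≤ beta) (hbeta1 : beta ≤ 1)
    (ε : ℝ) (hε : 0 < ε) (n : ℕ) (hn : lam₀ ^ (2 / α) < (n : ℝ)) :
    ((Measure.pi fun _ : Fin n => ξ).prod (Measure.pi fun _ : Fin n × Fin n => u))
      {ω | ε * (∫ ω', Zrand w (lamF n) beta ω'
              ∂ ((Measure.pi fun _ : Fin n => ξ).prod
                  (Measure.pi fun _ : Fin n × Fin n => u)))
            ≤ |Zrand w (lamF n) beta ω
                - ∫ ω', Zrand w (lamF n) beta ω'
                    ∂ ((Measure.pi fun _ : Fin n => ξ).prod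
                        (Measure.pi fun _ : Fin n × Fin n => u))|}
      ≤ ENNReal.ofReal (lam₀ ^ 2 / (((n : ℝ) ^ α - lam₀ ^ 2) * ε ^ 2)) := by
  exact Zrand_concentration_general w hw (fun _ => ξ) (fun _ => u) (hlamF n) hlam₀ hα (hbound n) hn
    hbeta0 hbeta1 hε
end

section
/- Let G ~ D_n(V, φ) with ν(V) = Vol. For all ε ∈ (0,1], δ ∈ (0,1], and n ≥ 4ε⁻²δ⁻¹ max{e⁶λ²Vol², ln(4ε⁻¹)²}, it holds that Pr[|Z_G(λVol/n) − Ξ(V,λ,φ)| ≥ ε·Ξ(V,λ,φ)] ≤ δ, where Ξ(V,λ,φ) is the Gibbs point process partition function and Z_G the hard-core partition function. -/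
open MeasureTheory

/-- Adjacency in the random graph determined by the outcome `ω`. -/
def edgeOcc {X : Type*} {n : ℕ} (φ : X → X → ℝ)
    (ω : (Fin n → X) × (Fin n × Fin n → ℝ)) (i j : Fin n) : Prop :=
  (i < j ∧ ω.2 (i, j) ≤ 1 - Real.exp (-φ (ω.1 i) (ω.1 j))) ∨
  (j < i ∧ ω.2 (j, i) ≤ 1 - Real.exp (-φ (ω.1 j) (ω.1 i)))

open Classical in
/-- Hard-core partition function of the random graph determined by the outcome `ω`. -/
noncomputable def hcZrand {X : Type*} {n : ℕ} (φ : X → X → ℝ) (z : ℝ)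
    (ω : (Fin n → X) × (Fin n × Fin n → ℝ)) : ℝ :=
  ∑ I : Finset (Fin n),
    if ∀ i ∈ I, ∀ j ∈ I, ¬ edgeOcc φ ω i j then z ^ I.card else 0

/-- Grand-canonical partition function of the repulsive Gibbs point process. -/
noncomputable def gppXi {X : Type*} [MeasurableSpace X] (ν : Measure X) (V : Set X)
    [Fact (ν V < ⊤)] (φ : X → X → ℝ) (lam : ℝ) : ℝ :=
  1 + ∑' k : ℕ, (lam ^ (k + 1) / (Nat.factorial (k + 1) : ℝ)) *
    ∫ y : Fin (k + 1) → X,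
      ∏ q ∈ Finset.univ.filter (fun q : Fin (k + 1) × Fin (k + 1) => q.1 < q.2),
        Real.exp (-φ (y q.1) (y q.2)) ∂ Measure.pi (fun _ : Fin (k + 1) => ν.restrict V)

/-!
Write `L = λ Vol` and `z = L / n`. The Boltzmann weight of a configuration is the conditional
probability, given the points, that the random graph has no edge among them. Hence `𝔼 Z` is the sum
of `C(n, k) z ^ k c_k` over `k`, where `c_k` is the mean Boltzmann weight of `k` independent uniform
points, whereas `Ξ` is the sum of `L ^ k / k! c_k`. The ratio of the two coefficients of `c_k` is
`n! / ((n - k)! n ^ k)`, which lies between `1 - k (k - 1) / n` and `1`; as `c` is antitone, it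
follows that `(1 - L² / n) Ξ ≤ 𝔼 Z ≤ Ξ`.

For the second moment, bound the product of the indicators that `I` and `J` are independent sets by
that of `I \ J` and `J \ I`; these two are independent, and summing over the intersection `I ∩ J`
gives `𝔼 Z² ≤ (1 + z²) ^ n (𝔼 Z)²`. Chebyshev's inequality about `Ξ` concludes.
-/

section ExponentialSeries

lemma one_sub_le_descFactorial_div_pow {n : ℕ} (hn : 0 < n) (k : ℕ) :
    1 - (k : ℝ) * (k - 1) / n ≤ (n.descFactorial k : ℝ) / (n : ℝ) ^ k := by
  have hn' : (1 : ℝ) ≤ n := by exact_mod_cast hn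
  rcases le_or_gt k n with hkn | hkn
  · have hk : (k : ℝ) ≤ n := by exact_mod_cast hkn
    have hdesc : ((n : ℝ) + 1 - k) ^ k ≤ n.descFactorial k := by
      have := Nat.pow_sub_le_descFactorial n k
      rw [← Nat.cast_le (α := ℝ)] at this
      push_cast [hkn.trans n.le_succ] at this
      exact this
    calc 1 - (k : ℝ) * (k - 1) / n = 1 + k * (-((k - 1) / n)) := by ring
      _ ≤ (1 + -((k - 1) / n)) ^ k := by
        refine one_add_mul_le_pow ?_ k
        have : ((k : ℝ) - 1) / n ≤ 1 := (div_le_one (by positivity)).2 (by linarith)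
        linarith
      _ = ((n : ℝ) + 1 - k) ^ k / (n : ℝ) ^ k := by
        rw [← div_pow]
        congr 1
        field_simp
        ring
      _ ≤ (n.descFactorial k : ℝ) / (n : ℝ) ^ k := by gcongr
  · have hk : (n : ℝ) + 1 ≤ k := by exact_mod_cast hkn
    calc 1 - (k : ℝ) * (k - 1) / n ≤ 0 := by
          rw [sub_nonpos, one_le_div (by positivity)]
          nlinarith
      _ ≤ (n.descFactorial k : ℝ) / (n : ℝ) ^ k := by positivity

lemma choose_mul_div_pow_eq (n k : ℕ) (L : ℝ) :
    (n.choose k : ℝ) * (L / n) ^ k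
      = L ^ k / k.factorial * ((n.descFactorial k : ℝ) / (n : ℝ) ^ k) := by
  rw [Nat.descFactorial_eq_factorial_mul_choose, div_pow]
  push_cast
  field_simp

variable {p : ℕ → ℝ} {L : ℝ}

lemma summable_pow_div_factorial_mul (hp0 : ∀ k, 0 ≤ p k) (hp : Antitone p) (hL : 0 ≤ L) :
    Summable fun k : ℕ => L ^ k / k.factorial * p k := by
  refine .of_nonneg_of_le (fun k => ?_) (fun k => ?_)
    ((Real.summable_pow_div_factorial L).mul_right (p 0))
  · have := hp0 k
    positivity
  · have := hp k.zero_le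
    gcongr

lemma sum_choose_mul_le_tsum (hp0 : ∀ k, 0 ≤ p k) (hp : Antitone p) (hL : 0 ≤ L) (n : ℕ) :
    ∑ k ∈ Finset.range (n + 1), (n.choose k : ℝ) * (L / n) ^ k * p k
      ≤ ∑' k : ℕ, L ^ k / k.factorial * p k := by
  have hterm : ∀ k, 0 ≤ L ^ k / k.factorial * p k := fun k => by
    have := hp0 k
    positivity
  refine (Finset.sum_le_sum fun k _ => ?_).trans
    ((summable_pow_div_factorial_mul hp0 hp hL).sum_le_tsum _ fun k _ => hterm k)
  have hdesc : (n.descFactorial k : ℝ) / (n : ℝ) ^ k ≤ 1 :=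
    div_le_one_of_le₀ (by exact_mod_cast Nat.descFactorial_le_pow n k) (by positivity)
  rw [choose_mul_div_pow_eq, mul_right_comm]
  exact mul_le_of_le_one_right (hterm k) hdesc

lemma mul_sub_one_mul_pow_div_factorial_add_two (L : ℝ) (k : ℕ) :
    ((k + 2 : ℕ) : ℝ) * ((k + 2 : ℕ) - 1) * (L ^ (k + 2) / (k + 2).factorial)
      = L ^ 2 * (L ^ k / k.factorial) := by
  simp only [Nat.factorial_succ]
  push_cast
  field_simp
  ring

lemma summable_mul_sub_one_mul_pow_div_factorial (hp0 : ∀ k, 0 ≤ p k) (hp : Antitone p)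
    (hL : 0 ≤ L) :
    Summable fun k : ℕ => (k : ℝ) * (k - 1) * (L ^ k / k.factorial * p k) := by
  rw [← summable_nat_add_iff 2]
  simp_rw [← mul_assoc, mul_sub_one_mul_pow_div_factorial_add_two, mul_assoc]
  exact (summable_pow_div_factorial_mul (fun k => hp0 (k + 2))
    (fun _ _ h => hp (Nat.add_le_add_right h 2)) hL).mul_left _

lemma tsum_mul_sub_one_mul_le (hp0 : ∀ k, 0 ≤ p k) (hp : Antitone p) (hL : 0 ≤ L) :
    ∑' k : ℕ, (k : ℝ) * (k - 1) * (L ^ k / k.factorial * p k)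
      ≤ L ^ 2 * ∑' k : ℕ, L ^ k / k.factorial * p k := by
  have hsum := summable_mul_sub_one_mul_pow_div_factorial hp0 hp hL
  rw [← hsum.sum_add_tsum_nat_add 2, ← tsum_mul_left]
  simp only [Finset.sum_range_succ, Finset.sum_range_zero, Nat.cast_zero, Nat.cast_one, zero_mul,
    sub_self, mul_zero, add_zero, zero_add]
  refine ((summable_nat_add_iff 2).2 hsum).tsum_le_tsum (fun k => ?_)
    ((summable_pow_div_factorial_mul hp0 hp hL).mul_left _)
  have := hp (Nat.le_add_right k 2)
  rw [← mul_assoc, mul_sub_one_mul_pow_div_factorial_add_two, mul_assoc]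
  gcongr

lemma one_sub_mul_tsum_le_sum_choose_mul (hp0 : ∀ k, 0 ≤ p k) (hp : Antitone p) (hL : 0 ≤ L)
    {n : ℕ} (hn : 0 < n) :
    (1 - L ^ 2 / n) * ∑' k : ℕ, L ^ k / k.factorial * p k
      ≤ ∑ k ∈ Finset.range (n + 1), (n.choose k : ℝ) * (L / n) ^ k * p k := by
  have hsum := summable_pow_div_factorial_mul hp0 hp hL
  have hsum₂ := (summable_mul_sub_one_mul_pow_div_factorial hp0 hp hL).div_const (n : ℝ)
  have hbinom : HasSum (fun k => (n.choose k : ℝ) * (L / n) ^ k * p k)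
      (∑ k ∈ Finset.range (n + 1), (n.choose k : ℝ) * (L / n) ^ k * p k) :=
    hasSum_sum_of_ne_finset_zero fun k hk => by
      rw [Nat.choose_eq_zero_of_lt (by simpa using hk), Nat.cast_zero, zero_mul, zero_mul]
  calc (1 - L ^ 2 / n) * ∑' k : ℕ, L ^ k / k.factorial * p k
      = ∑' k : ℕ, L ^ k / k.factorial * p k
          - (L ^ 2 * ∑' k : ℕ, L ^ k / k.factorial * p k) / n := by ring
    _ ≤ ∑' k : ℕ, L ^ k / k.factorial * p k
          - (∑' k : ℕ, (k : ℝ) * (k - 1) * (L ^ k / k.factorial * p k)) / n := by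
      gcongr
      exact tsum_mul_sub_one_mul_le hp0 hp hL
    _ = ∑' k : ℕ, (L ^ k / k.factorial * p k
          - (k : ℝ) * (k - 1) * (L ^ k / k.factorial * p k) / n) := by
      rw [hsum.tsum_sub hsum₂, tsum_div_const]
    _ ≤ ∑' k : ℕ, (n.choose k : ℝ) * (L / n) ^ k * p k := by
      refine (hsum.sub hsum₂).tsum_le_tsum (fun k => ?_) hbinom.summable
      have hterm : 0 ≤ L ^ k / k.factorial * p k := by
        have := hp0 k
        positivity
      calc L ^ k / k.factorial * p k - (k : ℝ) * (k - 1) * (L ^ k / k.factorial * p k) / n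
          = L ^ k / k.factorial * p k * (1 - (k : ℝ) * (k - 1) / n) := by ring
        _ ≤ L ^ k / k.factorial * p k * ((n.descFactorial k : ℝ) / (n : ℝ) ^ k) :=
          mul_le_mul_of_nonneg_left (one_sub_le_descFactorial_div_pow hn k) hterm
        _ = (n.choose k : ℝ) * (L / n) ^ k * p k := by
          rw [choose_mul_div_pow_eq, mul_right_comm]
    _ = ∑ k ∈ Finset.range (n + 1), (n.choose k : ℝ) * (L / n) ^ k * p k := hbinom.tsum_eq

end ExponentialSeries

lemma sum_sum_pow_mul_sdiff_le {α : Type*} [Fintype α] [DecidableEq α] {z : ℝ} (hz : 0 ≤ z)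
    {f : Finset α → ℝ} (hf : ∀ I, 0 ≤ f I) :
    ∑ I : Finset α, ∑ J : Finset α, z ^ I.card * z ^ J.card * (f (I \ J) * f (J \ I))
      ≤ (1 + z ^ 2) ^ Fintype.card α * (∑ I : Finset α, z ^ I.card * f I) ^ 2 := by
  let F : Finset α × Finset α × Finset α → ℝ := fun t =>
    (z ^ 2) ^ t.1.card * ((z ^ t.2.1.card * f t.2.1) * (z ^ t.2.2.card * f t.2.2))
  let split : Finset α × Finset α → Finset α × Finset α × Finset α := fun s =>
    (s.1 ∩ s.2, s.1 \ s.2, s.2 \ s.1)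
  have hsplit : Function.Injective split := by
    rintro ⟨I, J⟩ ⟨I', J'⟩ h
    obtain ⟨hinter, hIJ, hJI⟩ : I ∩ J = I' ∩ J' ∧ I \ J = I' \ J' ∧ J \ I = J' \ I' := by
      simpa only [split, Prod.mk.injEq] using h
    ext1
    · rw [← Finset.sdiff_union_inter I J, hIJ, hinter, Finset.sdiff_union_inter]
    · rw [← Finset.sdiff_union_inter J I, hJI, Finset.inter_comm, hinter, Finset.inter_comm,
        Finset.sdiff_union_inter]
  have hterm (I J : Finset α) :
      z ^ I.card * z ^ J.card * (f (I \ J) * f (J \ I)) = F (split (I, J)) := by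
    rw [← Finset.card_sdiff_add_card_inter I J, ← Finset.card_sdiff_add_card_inter J I,
      Finset.inter_comm J I]
    simp only [F, split]
    ring
  calc ∑ I : Finset α, ∑ J : Finset α, z ^ I.card * z ^ J.card * (f (I \ J) * f (J \ I))
      = ∑ s, F (split s) := by simp_rw [hterm, Fintype.sum_prod_type]
    _ = ∑ t ∈ Finset.univ.map ⟨split, hsplit⟩, F t := by rw [Finset.sum_map]; rfl
    _ ≤ ∑ t, F t := by
      refine Finset.sum_le_sum_of_subset_of_nonneg (Finset.subset_univ _) fun t _ _ => ?_
      have h₁ := hf t.2.1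
      have h₂ := hf t.2.2
      positivity
    _ = (∑ A : Finset α, (z ^ 2) ^ A.card) * (∑ I : Finset α, z ^ I.card * f I) ^ 2 := by
      rw [sq (∑ I : Finset α, z ^ I.card * f I), Finset.sum_mul_sum, ← Fintype.sum_prod_type',
        Finset.sum_mul_sum, ← Fintype.sum_prod_type']
    _ = (1 + z ^ 2) ^ Fintype.card α * (∑ I : Finset α, z ^ I.card * f I) ^ 2 := by
      have := Fintype.sum_pow_mul_eq_add_pow α (z ^ 2) 1
      simp only [one_pow, mul_one] at this
      rw [this, add_comm]

section Probability

open ProbabilityTheory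

variable {Ω : Type*} [MeasurableSpace Ω] {P : Measure Ω} [IsProbabilityMeasure P] {Y : Ω → ℝ}

lemma integral_sub_const_sq (hY : MemLp Y 2 P) (c : ℝ) :
    ∫ ω, (Y ω - c) ^ 2 ∂P = Var[Y; P] + (∫ ω, Y ω ∂P - c) ^ 2 := by
  have hvar := variance_eq_sub (hY.sub (memLp_const c))
  have hmean : ∫ ω, (Y - fun _ : Ω => c : Ω → ℝ) ω ∂P = ∫ ω, Y ω ∂P - c := by
    simpa using integral_sub (hY.integrable one_le_two) (integrable_const c)
  rw [hmean] at hvar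
  rw [← variance_sub_const hY.aestronglyMeasurable c]
  exact sub_eq_iff_eq_add.1 hvar.symm

lemma measure_le_abs_sub_le_ofReal (hY : MemLp Y 2 P) (c : ℝ) {r : ℝ} (hr : 0 < r) :
    P {ω | r ≤ |Y ω - c|}
      ≤ ENNReal.ofReal ((Var[Y; P] + (∫ ω, Y ω ∂P - c) ^ 2) / r ^ 2) := by
  have hset : {ω | r ≤ |Y ω - c|} = {ω | r ^ 2 ≤ (Y ω - c) ^ 2} := by
    ext ω
    rw [Set.mem_ofPred_eq, Set.mem_ofPred_eq, sq_le_sq, abs_of_pos hr]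
  rw [hset, ← integral_sub_const_sq hY, ← ofReal_measureReal]
  refine ENNReal.ofReal_le_ofReal ((le_div_iff₀' (by positivity)).2 ?_)
  exact mul_meas_ge_le_integral_of_nonneg (.of_forall fun ω => sq_nonneg (Y ω - c))
    (hY.sub (memLp_const c)).integrable_sq (r ^ 2)

end Probability

section ProductMeasure

open ProbabilityTheory

variable {ι κ : Type*} [Fintype ι] [Fintype κ] {E : ι → Type*} [∀ i, MeasurableSpace (E i)]
  (μ : ∀ i, Measure (E i))

lemma measurePreserving_pi_comp_injective [∀ i, IsProbabilityMeasure (μ i)] {e : κ → ι}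
    (he : Function.Injective e) :
    MeasurePreserving (fun (x : ∀ i, E i) j => x (e j)) (Measure.pi μ)
      (Measure.pi fun j => μ (e j)) := by
  refine ⟨by fun_prop, ?_⟩
  have hindep := (iIndepFun_pi (μ := μ) (X := fun _ => id) fun _ => aemeasurable_id).precomp he
  simp only [id] at hindep
  rw [iIndepFun_iff_map_fun_eq_pi_map
    fun j => (measurable_pi_apply (e j)).aemeasurable] at hindep
  exact hindep.trans (congrArg Measure.pi (funext fun j => (measurePreserving_eval μ (e j)).map_eq))

lemma integral_pi_finset_prod [∀ i, IsProbabilityMeasure (μ i)] (S : Finset ι)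
    (f : ∀ i, E i → ℝ) :
    ∫ x, ∏ i ∈ S, f i (x i) ∂Measure.pi μ = ∏ i ∈ S, ∫ t, f i t ∂μ i := by
  classical
  let g (i : ι) : E i → ℝ := if i ∈ S then f i else 1
  have hg (x : ∀ i, E i) : ∏ i ∈ S, f i (x i) = ∏ i, g i (x i) := by
    rw [← Fintype.prod_ite_mem S]
    simp only [g, ite_apply, Pi.one_apply]
  simp_rw [hg]
  rw [integral_fintype_prod_eq_prod, ← Fintype.prod_ite_mem S]
  refine Finset.prod_congr rfl fun i _ => ?_
  by_cases hi : i ∈ S <;> simp [g, hi]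

lemma pi_const_smul {X : Type*} [MeasurableSpace X] {c : ENNReal} (hc : c ≠ ⊤) (μ : Measure X)
    [SigmaFinite μ] :
    (Measure.pi fun _ : ι => c • μ) = c ^ Fintype.card ι • Measure.pi fun _ : ι => μ := by
  lift c to NNReal using hc
  have : SigmaFinite ((c : ENNReal) • μ) := SMul.sigmaFinite c
  refine Measure.pi_eq fun s _ => ?_
  simp [Finset.prod_mul_distrib]

end ProductMeasure

section PairProducts

variable {ι κ : Type*} [LinearOrder ι] [LinearOrder κ]

/-- The two-element subsets of `I`, each encoded as its increasing pair. -/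
def orderedPairs (I : Finset ι) : Finset (ι × ι) :=
  (I ×ˢ I).filter fun q => q.1 < q.2

/-- The product of the pair weights `w` over the two-element subsets of `I`. Both Boltzmann weights
and indicators of independent sets are of this form. -/
def pairProd (w : ι × ι → ℝ) (I : Finset ι) : ℝ :=
  ∏ q ∈ orderedPairs I, w q

lemma mem_orderedPairs {I : Finset ι} {q : ι × ι} :
    q ∈ orderedPairs I ↔ (q.1 ∈ I ∧ q.2 ∈ I) ∧ q.1 < q.2 := by
  rw [orderedPairs, Finset.mem_filter, Finset.mem_product]

lemma orderedPairs_mono : Monotone (orderedPairs (ι := ι)) := fun _ _ hIJ _ hq => by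
  rw [mem_orderedPairs] at hq ⊢
  exact ⟨hq.1.imp (@hIJ _) (@hIJ _), hq.2⟩

lemma disjoint_orderedPairs {I J : Finset ι} (hIJ : Disjoint I J) :
    Disjoint (orderedPairs I) (orderedPairs J) :=
  Finset.disjoint_left.2 fun _ hI hJ =>
    Finset.disjoint_left.1 hIJ (mem_orderedPairs.1 hI).1.1 (mem_orderedPairs.1 hJ).1.1

lemma orderedPairs_map (e : κ ↪o ι) (I : Finset κ) :
    orderedPairs (I.map e.toEmbedding)
      = (orderedPairs I).map (e.toEmbedding.prodMap e.toEmbedding) := by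
  ext ⟨i, j⟩
  simp only [mem_orderedPairs, Finset.mem_map, Prod.exists, Function.Embedding.coe_prodMap,
    Prod.map_apply, Prod.mk.injEq, RelEmbedding.coe_toEmbedding]
  constructor
  · rintro ⟨⟨⟨a, ha, rfl⟩, b, hb, rfl⟩, hab⟩
    exact ⟨a, b, ⟨⟨ha, hb⟩, e.lt_iff_lt.1 hab⟩, rfl, rfl⟩
  · rintro ⟨a, b, ⟨⟨ha, hb⟩, hab⟩, rfl, rfl⟩
    exact ⟨⟨⟨a, ha, rfl⟩, b, hb, rfl⟩, e.lt_iff_lt.2 hab⟩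

lemma pairProd_map (e : κ ↪o ι) (w : ι × ι → ℝ) (I : Finset κ) :
    pairProd w (I.map e.toEmbedding) = pairProd (fun q => w (e q.1, e q.2)) I := by
  rw [pairProd, orderedPairs_map, Finset.prod_map]
  rfl

variable {w : ι × ι → ℝ}

lemma pairProd_mem_Icc (hw : ∀ q, w q ∈ Set.Icc 0 1) (I : Finset ι) :
    pairProd w I ∈ Set.Icc 0 1 :=
  ⟨Finset.prod_nonneg fun q _ => (hw q).1,
    Finset.prod_le_one (fun q _ => (hw q).1) fun q _ => (hw q).2⟩

lemma pairProd_anti (hw : ∀ q, w q ∈ Set.Icc 0 1) : Antitone (pairProd w) :=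
  (Finset.prod_anti_set_of_le_one (fun q => (hw q).1) fun q => (hw q).2).comp_monotone
    orderedPairs_mono

lemma pairProd_mul_pairProd {I J : Finset ι} (hIJ : Disjoint I J) :
    pairProd w I * pairProd w J = ∏ q ∈ orderedPairs I ∪ orderedPairs J, w q :=
  (Finset.prod_union (disjoint_orderedPairs hIJ)).symm

end PairProducts

section BoltzmannWeight

variable {X ι κ : Type*} (φ : X → X → ℝ)

/-- The factor `exp (-φ (x i) (x j))` of the pair `q = (i, j)`: given the points `x`, the
probability that the random graph does not have the edge `q`. -/
noncomputable def boltzmannFactor (x : ι → X) (q : ι × ι) : ℝ :=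
  Real.exp (-φ (x q.1) (x q.2))

/-- The Boltzmann weight of the points of `x` labelled by `I`. -/
noncomputable def boltzmannWeight [LinearOrder ι] (I : Finset ι) (x : ι → X) : ℝ :=
  pairProd (boltzmannFactor φ x) I

/-- The expected Boltzmann weight of `k` independent points of law `μ`. -/
noncomputable def meanBoltzmann [MeasurableSpace X] (μ : Measure X) (k : ℕ) : ℝ :=
  ∫ x, boltzmannWeight φ Finset.univ x ∂Measure.pi fun _ : Fin k => μ

variable {φ}

lemma boltzmannFactor_mem_Icc (hφ0 : ∀ x y, 0 ≤ φ x y) (x : ι → X) (q : ι × ι) :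
    boltzmannFactor φ x q ∈ Set.Icc 0 1 :=
  ⟨(Real.exp_pos _).le, Real.exp_le_one_iff.2 (neg_nonpos.2 (hφ0 _ _))⟩

lemma boltzmannWeight_map [LinearOrder ι] [LinearOrder κ] (e : κ ↪o ι) (I : Finset κ)
    (x : ι → X) :
    boltzmannWeight φ (I.map e.toEmbedding) x = boltzmannWeight φ I fun k => x (e k) :=
  pairProd_map e _ I

lemma meanBoltzmann_nonneg [MeasurableSpace X] (μ : Measure X) (k : ℕ) :
    0 ≤ meanBoltzmann φ μ k :=
  integral_nonneg fun _ => Finset.prod_nonneg fun _ _ => (Real.exp_pos _).le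

variable [MeasurableSpace X]

lemma measurable_boltzmannFactor (hφm : Measurable (Function.uncurry φ)) (q : ι × ι) :
    Measurable fun x : ι → X => boltzmannFactor φ x q := by
  have : Measurable fun x : ι → X => φ (x q.1) (x q.2) :=
    hφm.comp (f := fun x : ι → X => (x q.1, x q.2)) (by fun_prop)
  exact this.neg.exp

variable [LinearOrder ι]

lemma measurable_boltzmannWeight (hφm : Measurable (Function.uncurry φ)) (I : Finset ι) :
    Measurable (boltzmannWeight φ I) :=
  Finset.measurable_prod _ fun q _ => measurable_boltzmannFactor hφm q

lemma integrable_boltzmannWeight (hφm : Measurable (Function.uncurry φ))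
    (hφ0 : ∀ x y, 0 ≤ φ x y) (I : Finset ι) (P : Measure (ι → X)) [IsFiniteMeasure P] :
    Integrable (boltzmannWeight φ I) P :=
  memLp_one_iff_integrable.1 <| memLp_of_bounded
    (.of_forall fun x => pairProd_mem_Icc (boltzmannFactor_mem_Icc hφ0 x) I)
    (measurable_boltzmannWeight hφm I).aestronglyMeasurable 1

variable {μ : Measure X} [IsProbabilityMeasure μ]

lemma meanBoltzmann_zero : meanBoltzmann φ μ 0 = 1 := by
  simp [meanBoltzmann, boltzmannWeight, pairProd, orderedPairs]

variable [Fintype ι]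

lemma integral_boltzmannWeight (hφm : Measurable (Function.uncurry φ)) (I : Finset ι) :
    ∫ x, boltzmannWeight φ I x ∂(Measure.pi fun _ : ι => μ) = meanBoltzmann φ μ I.card := by
  let e := I.orderEmbOfFin rfl
  have hmp := measurePreserving_pi_comp_injective (fun _ => μ) e.injective
  calc ∫ x, boltzmannWeight φ I x ∂(Measure.pi fun _ : ι => μ)
      = ∫ x, boltzmannWeight φ Finset.univ (fun k => x (e k)) ∂(Measure.pi fun _ : ι => μ) := by
        simp_rw [← boltzmannWeight_map, e, Finset.map_orderEmbOfFin_univ]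
    _ = meanBoltzmann φ μ I.card := by
        rw [meanBoltzmann, ← hmp.map_eq, integral_map hmp.measurable.aemeasurable
          (measurable_boltzmannWeight hφm _).aestronglyMeasurable]

lemma meanBoltzmann_anti (hφm : Measurable (Function.uncurry φ)) (hφ0 : ∀ x y, 0 ≤ φ x y) :
    Antitone (meanBoltzmann φ μ) := fun k m hkm => by
  obtain ⟨I, -, rfl⟩ := Finset.exists_subset_card_eq
    (s := (Finset.univ : Finset (Fin m))) (n := k) (by simpa using hkm)
  rw [← integral_boltzmannWeight hφm, meanBoltzmann]
  exact integral_mono (integrable_boltzmannWeight hφm hφ0 _ _)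
    (integrable_boltzmannWeight hφm hφ0 _ _)
    fun x => pairProd_anti (boltzmannFactor_mem_Icc hφ0 x) I.subset_univ

open ProbabilityTheory in
lemma integral_boltzmannWeight_mul (hφm : Measurable (Function.uncurry φ)) {I J : Finset ι}
    (hIJ : Disjoint I J) :
    ∫ x, boltzmannWeight φ I x * boltzmannWeight φ J x ∂(Measure.pi fun _ : ι => μ)
      = meanBoltzmann φ μ I.card * meanBoltzmann φ μ J.card := by
  have hrestrict (K : Finset ι) (x : ι → X) :
      boltzmannWeight φ K x = boltzmannWeight φ Finset.univ fun k : K => x k := by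
    conv_lhs => rw [← Finset.attach_map_val (s := K), ← Finset.univ_eq_attach]
    exact boltzmannWeight_map (OrderEmbedding.subtype (· ∈ K)) _ x
  have hmeas (K : Finset ι) := measurable_boltzmannWeight hφm (Finset.univ : Finset K)
  have hindep := (iIndepFun_pi (μ := fun _ : ι => μ) (X := fun _ => id)
    fun _ => aemeasurable_id).indepFun_finset I J hIJ fun i => by fun_prop
  rw [← integral_boltzmannWeight hφm, ← integral_boltzmannWeight hφm]
  simp_rw [hrestrict I, hrestrict J]
  exact (hindep.comp (hmeas I) (hmeas J)).integral_fun_mul_eq_mul_integral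
    ((hmeas I).comp (by fun_prop)).aestronglyMeasurable
    ((hmeas J).comp (by fun_prop)).aestronglyMeasurable

end BoltzmannWeight

section RandomGraph

variable {X ι : Type*} (φ : X → X → ℝ)

open Classical in
/-- The indicator that the increasing pair `q` is not an edge of the graph of the outcome `ω`. -/
noncomputable def nonEdge (ω : (ι → X) × (ι × ι → ℝ)) (q : ι × ι) : ℝ :=
  if ω.2 q ≤ 1 - boltzmannFactor φ ω.1 q then 0 else 1

/-- The indicator that `I` is an independent set of the graph of the outcome `ω`. -/
noncomputable def indepIndicator [LinearOrder ι] (I : Finset ι) (ω : (ι → X) × (ι × ι → ℝ)) : ℝ :=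
  pairProd (nonEdge φ ω) I

/-- The law of the outcomes encoding the random graph `D_n(V, φ)`, with vertices labelled by `ι`:
independent points of law `μ` and an independent uniform threshold on `[0, 1]` for each pair. -/
noncomputable def randomGraphLaw [MeasurableSpace X] (μ : Measure X) (ι : Type*) [Fintype ι] :
    Measure ((ι → X) × (ι × ι → ℝ)) :=
  (Measure.pi fun _ : ι => μ).prod
    (Measure.pi fun _ : ι × ι => volume.restrict (Set.Icc (0 : ℝ) 1))

instance isProbabilityMeasure_restrict_Icc_zero_one :
    IsProbabilityMeasure (volume.restrict (Set.Icc (0 : ℝ) 1)) :=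
  ⟨by simp⟩

instance isProbabilityMeasure_randomGraphLaw [MeasurableSpace X] (μ : Measure X)
    [IsProbabilityMeasure μ] (ι : Type*) [Fintype ι] :
    IsProbabilityMeasure (randomGraphLaw μ ι) := by
  unfold randomGraphLaw
  infer_instance

variable {φ}

lemma nonEdge_mem_Icc (ω : (ι → X) × (ι × ι → ℝ)) (q : ι × ι) :
    nonEdge φ ω q ∈ Set.Icc 0 1 := by
  unfold nonEdge
  split_ifs <;> simp

lemma indepIndicator_eq_ite {n : ℕ} (I : Finset (Fin n))
    (ω : (Fin n → X) × (Fin n × Fin n → ℝ)) [Decidable (∀ i ∈ I, ∀ j ∈ I, ¬ edgeOcc φ ω i j)] :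
    indepIndicator φ I ω = if ∀ i ∈ I, ∀ j ∈ I, ¬ edgeOcc φ ω i j then 1 else 0 := by
  have hzero {i j : Fin n} (hi : i ∈ I) (hj : j ∈ I) (hij : i < j)
      (h : ω.2 (i, j) ≤ 1 - Real.exp (-φ (ω.1 i) (ω.1 j))) : indepIndicator φ I ω = 0 :=
    Finset.prod_eq_zero (mem_orderedPairs.2 ⟨⟨hi, hj⟩, hij⟩) (if_pos h)
  split_ifs with hI
  · refine Finset.prod_eq_one fun q hq => if_neg fun hle => ?_
    obtain ⟨⟨h₁, h₂⟩, hlt⟩ := mem_orderedPairs.1 hq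
    exact hI q.1 h₁ q.2 h₂ (.inl ⟨hlt, hle⟩)
  · push Not at hI
    obtain ⟨i, hi, j, hj, ⟨hij, h⟩ | ⟨hji, h⟩⟩ := hI
    · exact hzero hi hj hij h
    · exact hzero hj hi hji h

lemma hcZrand_eq_sum {n : ℕ} (z : ℝ) (ω : (Fin n → X) × (Fin n × Fin n → ℝ)) :
    hcZrand φ z ω = ∑ I : Finset (Fin n), z ^ I.card * indepIndicator φ I ω := by
  classical
  refine Finset.sum_congr rfl fun I _ => ?_
  rw [indepIndicator_eq_ite, mul_ite, mul_one, mul_zero]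

lemma hcZrand_sq_le {n : ℕ} {z : ℝ} (hz : 0 ≤ z) (ω : (Fin n → X) × (Fin n × Fin n → ℝ)) :
    hcZrand φ z ω ^ 2 ≤ ∑ I : Finset (Fin n), ∑ J : Finset (Fin n),
      z ^ I.card * z ^ J.card * (indepIndicator φ (I \ J) ω * indepIndicator φ (J \ I) ω) := by
  have hanti := pairProd_anti (nonEdge_mem_Icc (φ := φ) ω)
  have hnonneg (I : Finset (Fin n)) := (pairProd_mem_Icc (nonEdge_mem_Icc (φ := φ) ω) I).1
  rw [hcZrand_eq_sum, sq, Finset.sum_mul_sum]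
  refine Finset.sum_le_sum fun I _ => Finset.sum_le_sum fun J _ => ?_
  rw [mul_mul_mul_comm]
  exact mul_le_mul_of_nonneg_left (mul_le_mul (hanti Finset.sdiff_subset)
    (hanti Finset.sdiff_subset) (hnonneg _) (hnonneg _)) (by positivity)

lemma integral_ite_le_one_sub {a : ℝ} (ha : a ∈ Set.Icc 0 1) :
    ∫ t in Set.Icc (0 : ℝ) 1, (if t ≤ 1 - a then (0 : ℝ) else 1) = a := by
  have hind : (fun t : ℝ => if t ≤ 1 - a then (0 : ℝ) else 1) = (Set.Ioi (1 - a)).indicator 1 := by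
    ext t
    simp only [Set.indicator, Set.mem_Ioi, Pi.one_apply, ← not_le, ite_not]
  have hinter : Set.Ioi (1 - a) ∩ Set.Icc 0 1 = Set.Ioc (1 - a) 1 := by
    ext t
    simp only [Set.mem_inter_iff, Set.mem_Ioi, Set.mem_Icc, Set.mem_Ioc]
    exact ⟨fun h => ⟨h.1, h.2.2⟩, fun h => ⟨h.1, by linarith [ha.2, h.1], h.2⟩⟩
  rw [hind, integral_indicator_one measurableSet_Ioi, measureReal_restrict_apply measurableSet_Ioi,
    hinter, Real.volume_real_Ioc_of_le (by linarith [ha.1]), sub_sub_cancel]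

variable [MeasurableSpace X]

lemma measurable_nonEdge (hφm : Measurable (Function.uncurry φ)) (q : ι × ι) :
    Measurable fun ω : (ι → X) × (ι × ι → ℝ) => nonEdge φ ω q := by
  have := (measurable_boltzmannFactor hφm q).comp
    (measurable_fst : Measurable (Prod.fst : (ι → X) × (ι × ι → ℝ) → ι → X))
  exact .ite (measurableSet_le (by fun_prop) (measurable_const.sub this))
    measurable_const measurable_const

lemma memLp_prod_nonEdge (hφm : Measurable (Function.uncurry φ)) (S : Finset (ι × ι))
    (p : ENNReal) (P : Measure ((ι → X) × (ι × ι → ℝ))) [IsFiniteMeasure P] :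
    MemLp (fun ω => ∏ q ∈ S, nonEdge φ ω q) p P :=
  memLp_of_bounded
    (.of_forall fun ω => ⟨Finset.prod_nonneg fun q _ => (nonEdge_mem_Icc ω q).1,
      Finset.prod_le_one (fun q _ => (nonEdge_mem_Icc ω q).1) fun q _ => (nonEdge_mem_Icc ω q).2⟩)
    (Finset.measurable_prod _ fun q _ => measurable_nonEdge hφm q).aestronglyMeasurable p

lemma memLp_indepIndicator [LinearOrder ι] (hφm : Measurable (Function.uncurry φ)) (I : Finset ι)
    (p : ENNReal) (P : Measure ((ι → X) × (ι × ι → ℝ))) [IsFiniteMeasure P] :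
    MemLp (indepIndicator φ I) p P :=
  memLp_prod_nonEdge hφm _ p P

lemma memLp_hcZrand (hφm : Measurable (Function.uncurry φ)) {n : ℕ} (z : ℝ) (p : ENNReal)
    (P : Measure ((Fin n → X) × (Fin n × Fin n → ℝ))) [IsFiniteMeasure P] :
    MemLp (hcZrand φ z) p P := by
  rw [funext (hcZrand_eq_sum (φ := φ) z)]
  exact memLp_finsetSum _ fun I _ => (memLp_indepIndicator hφm I p P).const_mul _

variable {μ : Measure X} [IsProbabilityMeasure μ]

lemma integral_prod_nonEdge [Fintype ι] (hφm : Measurable (Function.uncurry φ))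
    (hφ0 : ∀ x y, 0 ≤ φ x y) (S : Finset (ι × ι)) :
    ∫ ω, ∏ q ∈ S, nonEdge φ ω q ∂randomGraphLaw μ ι
      = ∫ x, ∏ q ∈ S, boltzmannFactor φ x q ∂(Measure.pi fun _ : ι => μ) := by
  have hcond (x : ι → X) :
      ∫ y, ∏ q ∈ S, nonEdge φ (x, y) q
          ∂(Measure.pi fun _ : ι × ι => volume.restrict (Set.Icc (0 : ℝ) 1))
        = ∏ q ∈ S, boltzmannFactor φ x q := by
    simp only [nonEdge]
    rw [integral_pi_finset_prod _ S fun q t => if t ≤ 1 - boltzmannFactor φ x q then (0 : ℝ) else 1]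
    exact Finset.prod_congr rfl fun q _ =>
      integral_ite_le_one_sub (boltzmannFactor_mem_Icc hφ0 x q)
  rw [randomGraphLaw,
    integral_prod _ (memLp_one_iff_integrable.1 (memLp_prod_nonEdge hφm S 1 _))]
  simp_rw [hcond]

variable [LinearOrder ι] [Fintype ι]

lemma integral_indepIndicator (hφm : Measurable (Function.uncurry φ)) (hφ0 : ∀ x y, 0 ≤ φ x y)
    (I : Finset ι) :
    ∫ ω, indepIndicator φ I ω ∂randomGraphLaw μ ι = meanBoltzmann φ μ I.card := by
  rw [← integral_boltzmannWeight hφm]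
  exact integral_prod_nonEdge hφm hφ0 _

lemma integral_indepIndicator_mul (hφm : Measurable (Function.uncurry φ))
    (hφ0 : ∀ x y, 0 ≤ φ x y) {I J : Finset ι} (hIJ : Disjoint I J) :
    ∫ ω, indepIndicator φ I ω * indepIndicator φ J ω ∂randomGraphLaw μ ι
      = meanBoltzmann φ μ I.card * meanBoltzmann φ μ J.card := by
  rw [← integral_boltzmannWeight_mul hφm hIJ]
  simp_rw [indepIndicator, boltzmannWeight, pairProd_mul_pairProd hIJ]
  exact integral_prod_nonEdge hφm hφ0 _

end RandomGraph

section HardCore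

open ProbabilityTheory

variable {X : Type*} [MeasurableSpace X] {φ : X → X → ℝ} {μ : Measure X} [IsProbabilityMeasure μ]
  {n : ℕ}

lemma integral_hcZrand (hφm : Measurable (Function.uncurry φ)) (hφ0 : ∀ x y, 0 ≤ φ x y) (z : ℝ) :
    ∫ ω, hcZrand φ z ω ∂randomGraphLaw μ (Fin n)
      = ∑ I : Finset (Fin n), z ^ I.card * meanBoltzmann φ μ I.card := by
  simp_rw [hcZrand_eq_sum]
  rw [integral_finsetSum _ fun I _ =>
    (memLp_one_iff_integrable.1 (memLp_indepIndicator hφm I 1 _)).const_mul _]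
  simp_rw [integral_const_mul, integral_indepIndicator hφm hφ0]

lemma integral_hcZrand_eq_sum_range (hφm : Measurable (Function.uncurry φ))
    (hφ0 : ∀ x y, 0 ≤ φ x y) (z : ℝ) :
    ∫ ω, hcZrand φ z ω ∂randomGraphLaw μ (Fin n)
      = ∑ k ∈ Finset.range (n + 1), (n.choose k : ℝ) * z ^ k * meanBoltzmann φ μ k := by
  rw [integral_hcZrand hφm hφ0, ← Finset.powerset_univ,
    Finset.sum_powerset_apply_card fun k => z ^ k * meanBoltzmann φ μ k]
  simp only [Finset.card_univ, Fintype.card_fin, nsmul_eq_mul, mul_assoc]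

lemma integral_hcZrand_sq_le (hφm : Measurable (Function.uncurry φ)) (hφ0 : ∀ x y, 0 ≤ φ x y)
    {z : ℝ} (hz : 0 ≤ z) :
    ∫ ω, hcZrand φ z ω ^ 2 ∂randomGraphLaw μ (Fin n)
      ≤ (1 + z ^ 2) ^ n * (∫ ω, hcZrand φ z ω ∂randomGraphLaw μ (Fin n)) ^ 2 := by
  have hint (I J : Finset (Fin n)) : Integrable (fun ω => z ^ I.card * z ^ J.card *
      (indepIndicator φ (I \ J) ω * indepIndicator φ (J \ I) ω)) (randomGraphLaw μ (Fin n)) :=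
    ((memLp_indepIndicator hφm _ 2 _).integrable_mul (memLp_indepIndicator hφm _ 2 _)).const_mul _
  have hint' (I : Finset (Fin n)) := integrable_finsetSum Finset.univ fun J _ => hint I J
  calc ∫ ω, hcZrand φ z ω ^ 2 ∂randomGraphLaw μ (Fin n)
      ≤ ∫ ω, ∑ I : Finset (Fin n), ∑ J : Finset (Fin n), z ^ I.card * z ^ J.card *
          (indepIndicator φ (I \ J) ω * indepIndicator φ (J \ I) ω)
          ∂randomGraphLaw μ (Fin n) :=
        integral_mono (memLp_hcZrand hφm z 2 _).integrable_sq
          (integrable_finsetSum _ fun I _ => hint' I) (hcZrand_sq_le hz)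
    _ = ∑ I : Finset (Fin n), ∑ J : Finset (Fin n), z ^ I.card * z ^ J.card *
          (meanBoltzmann φ μ (I \ J).card * meanBoltzmann φ μ (J \ I).card) := by
        rw [integral_finsetSum _ fun I _ => hint' I]
        refine Finset.sum_congr rfl fun I _ => ?_
        rw [integral_finsetSum _ fun J _ => hint I J]
        refine Finset.sum_congr rfl fun J _ => ?_
        rw [integral_const_mul, integral_indepIndicator_mul hφm hφ0 disjoint_sdiff_sdiff]
    _ ≤ (1 + z ^ 2) ^ n *
          (∑ I : Finset (Fin n), z ^ I.card * meanBoltzmann φ μ I.card) ^ 2 := by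
        simpa only [Fintype.card_fin] using
          sum_sum_pow_mul_sdiff_le hz fun I : Finset (Fin n) => meanBoltzmann_nonneg μ I.card
    _ = (1 + z ^ 2) ^ n * (∫ ω, hcZrand φ z ω ∂randomGraphLaw μ (Fin n)) ^ 2 := by
        rw [integral_hcZrand hφm hφ0]

lemma variance_hcZrand_le (hφm : Measurable (Function.uncurry φ)) (hφ0 : ∀ x y, 0 ≤ φ x y)
    {z : ℝ} (hz : 0 ≤ z) :
    Var[hcZrand φ z; randomGraphLaw μ (Fin n)]
      ≤ ((1 + z ^ 2) ^ n - 1) * (∫ ω, hcZrand φ z ω ∂randomGraphLaw μ (Fin n)) ^ 2 := by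
  rw [variance_eq_sub (memLp_hcZrand hφm z 2 _), sub_mul, one_mul]
  exact sub_le_sub_right (integral_hcZrand_sq_le hφm hφ0 hz) _

end HardCore

section GibbsPointProcess

open ProbabilityTheory

variable {X : Type*} [MeasurableSpace X] {ν : Measure X} {V : Set X} [Fact (ν V < ⊤)]
  {φ : X → X → ℝ} {lam : ℝ} {μ : Measure X} [IsProbabilityMeasure μ]

lemma gppXi_eq_tsum (hφm : Measurable (Function.uncurry φ)) (hφ0 : ∀ x y, 0 ≤ φ x y)
    (hlam : 0 ≤ lam) (hμ : ν.restrict V = ν V • μ) :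
    gppXi ν V φ lam
      = ∑' k : ℕ, (lam * (ν V).toReal) ^ k / k.factorial * meanBoltzmann φ μ k := by
  have hfin : ν V ≠ ⊤ := (Fact.out : ν V < ⊤).ne
  have hsum := summable_pow_div_factorial_mul (meanBoltzmann_nonneg μ) (meanBoltzmann_anti hφm hφ0)
    (mul_nonneg hlam (ν V).toReal_nonneg)
  have hterm (k : ℕ) :
      ∫ y, boltzmannWeight φ Finset.univ y ∂(Measure.pi fun _ : Fin k => ν.restrict V)
        = (ν V).toReal ^ k * meanBoltzmann φ μ k := by
    rw [hμ, pi_const_smul hfin, integral_smul_measure, Fintype.card_fin, ENNReal.toReal_pow,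
      smul_eq_mul, meanBoltzmann]
  rw [hsum.tsum_eq_zero_add, meanBoltzmann_zero, pow_zero, Nat.factorial_zero, Nat.cast_one,
    div_one, mul_one]
  refine congrArg (1 + ·) (tsum_congr fun k => ?_)
  rw [mul_pow, mul_div_right_comm, mul_assoc, ← hterm]
  simp only [boltzmannWeight, pairProd, orderedPairs, boltzmannFactor, Finset.univ_product_univ]

lemma one_le_gppXi (hφm : Measurable (Function.uncurry φ)) (hφ0 : ∀ x y, 0 ≤ φ x y)
    (hlam : 0 ≤ lam) (hμ : ν.restrict V = ν V • μ) : 1 ≤ gppXi ν V φ lam := by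
  have hterm (k : ℕ) : 0 ≤ (lam * (ν V).toReal) ^ k / k.factorial * meanBoltzmann φ μ k := by
    have := meanBoltzmann_nonneg (φ := φ) μ k
    positivity
  have hsum := summable_pow_div_factorial_mul (meanBoltzmann_nonneg μ) (meanBoltzmann_anti hφm hφ0)
    (mul_nonneg hlam (ν V).toReal_nonneg)
  rw [gppXi_eq_tsum hφm hφ0 hlam hμ]
  simpa [meanBoltzmann_zero] using hsum.le_tsum 0 fun k _ => hterm k

lemma integral_hcZrand_le_gppXi (hφm : Measurable (Function.uncurry φ)) (hφ0 : ∀ x y, 0 ≤ φ x y)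
    (hlam : 0 ≤ lam) (hμ : ν.restrict V = ν V • μ) (n : ℕ) :
    ∫ ω, hcZrand φ (lam * (ν V).toReal / n) ω ∂randomGraphLaw μ (Fin n) ≤ gppXi ν V φ lam := by
  rw [gppXi_eq_tsum hφm hφ0 hlam hμ, integral_hcZrand_eq_sum_range hφm hφ0]
  exact sum_choose_mul_le_tsum (meanBoltzmann_nonneg μ) (meanBoltzmann_anti hφm hφ0)
    (by positivity) n

lemma one_sub_mul_gppXi_le_integral_hcZrand (hφm : Measurable (Function.uncurry φ))
    (hφ0 : ∀ x y, 0 ≤ φ x y) (hlam : 0 ≤ lam) (hμ : ν.restrict V = ν V • μ) {n : ℕ}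
    (hn : 0 < n) :
    (1 - (lam * (ν V).toReal) ^ 2 / n) * gppXi ν V φ lam
      ≤ ∫ ω, hcZrand φ (lam * (ν V).toReal / n) ω ∂randomGraphLaw μ (Fin n) := by
  rw [gppXi_eq_tsum hφm hφ0 hlam hμ, integral_hcZrand_eq_sum_range hφm hφ0]
  exact one_sub_mul_tsum_le_sum_choose_mul (meanBoltzmann_nonneg μ) (meanBoltzmann_anti hφm hφ0)
    (by positivity) hn

lemma one_add_div_sq_pow_le_exp (L : ℝ) (n : ℕ) :
    (1 + (L / n) ^ 2) ^ n ≤ Real.exp (L ^ 2 / n) := by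
  calc (1 + (L / n) ^ 2) ^ n ≤ Real.exp ((L / n) ^ 2) ^ n := by
        gcongr
        linarith [Real.add_one_le_exp ((L / n) ^ 2)]
    _ = Real.exp (L ^ 2 / n) := by
        rw [← Real.exp_nat_mul]
        congr 1
        field_simp

lemma variance_hcZrand_add_sq_le (hφm : Measurable (Function.uncurry φ))
    (hφ0 : ∀ x y, 0 ≤ φ x y) (hlam : 0 ≤ lam) (hμ : ν.restrict V = ν V • μ) {n : ℕ}
    (hn : 0 < n) :
    Var[hcZrand φ (lam * (ν V).toReal / n); randomGraphLaw μ (Fin n)]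
        + (∫ ω, hcZrand φ (lam * (ν V).toReal / n) ω ∂randomGraphLaw μ (Fin n)
            - gppXi ν V φ lam) ^ 2
      ≤ (Real.exp ((lam * (ν V).toReal) ^ 2 / n) - 1 + ((lam * (ν V).toReal) ^ 2 / n) ^ 2)
          * gppXi ν V φ lam ^ 2 := by
  have hupper := integral_hcZrand_le_gppXi hφm hφ0 hlam hμ n
  have hlower := one_sub_mul_gppXi_le_integral_hcZrand hφm hφ0 hlam hμ hn
  have hvar := variance_hcZrand_le (μ := μ) (n := n) hφm hφ0
    (show 0 ≤ lam * (ν V).toReal / n by positivity)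
  have hmean : 0 ≤ ∫ ω, hcZrand φ (lam * (ν V).toReal / n) ω ∂randomGraphLaw μ (Fin n) := by
    rw [integral_hcZrand hφm hφ0]
    exact Finset.sum_nonneg fun I _ => mul_nonneg (by positivity) (meanBoltzmann_nonneg μ _)
  have hexp := one_add_div_sq_pow_le_exp (lam * (ν V).toReal) n
  generalize lam * (ν V).toReal = L at *
  generalize ∫ ω, hcZrand φ (L / n) ω ∂randomGraphLaw μ (Fin n) = M at *
  generalize gppXi ν V φ lam = Ξ at *
  have hvar' : Var[hcZrand φ (L / n); randomGraphLaw μ (Fin n)]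
      ≤ (Real.exp (L ^ 2 / n) - 1) * Ξ ^ 2 := by
    refine hvar.trans (mul_le_mul (by linarith) (by gcongr) (by positivity) ?_)
    linarith [Real.add_one_le_exp (L ^ 2 / n), show 0 ≤ L ^ 2 / n by positivity]
  have hbias : (M - Ξ) ^ 2 ≤ (L ^ 2 / n) ^ 2 * Ξ ^ 2 := by
    rw [← mul_pow, ← neg_sq, neg_sub]
    exact pow_le_pow_left₀ (by linarith) (by linarith) 2
  linarith

end GibbsPointProcess

lemma exp_sub_one_add_sq_le_three_mul {t : ℝ} (ht0 : 0 ≤ t) (ht1 : t ≤ 1) :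
    Real.exp t - 1 + t ^ 2 ≤ 3 * t := by
  have hexp := Real.abs_exp_sub_one_le (x := t) (by rwa [abs_of_nonneg ht0])
  rw [abs_of_nonneg ht0] at hexp
  nlinarith [le_abs_self (Real.exp t - 1)]


lemma exp_sq_div_sub_one_add_sq_div_le {L n ε δ : ℝ} (hn : 0 < n) (hε : 0 < ε) (hε1 : ε ≤ 1)
    (hδ1 : δ ≤ 1) (hL : 3 * L ^ 2 ≤ ε ^ 2 * δ * n) :
    (Real.exp (L ^ 2 / n) - 1 + (L ^ 2 / n) ^ 2) / ε ^ 2 ≤ δ := by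
  have hscaled : 3 * (L ^ 2 / n) ≤ δ * ε ^ 2 := by
    rw [← mul_div_assoc, div_le_iff₀ hn]
    linarith
  have hle : δ * ε ^ 2 ≤ 1 := mul_le_one₀ hδ1 (by positivity) (pow_le_one₀ hε.le hε1)
  rw [div_le_iff₀ (by positivity)]
  exact (exp_sub_one_add_sq_le_three_mul (by positivity) (by linarith)).trans hscaled

lemma pos_and_three_mul_sq_le_of_four_mul_max_le {lam vol n ε δ : ℝ} (hε : 0 < ε) (hε1 : ε ≤ 1)
    (hδ : 0 < δ)
    (hn : 4 * ε⁻¹ ^ 2 * δ⁻¹ *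
      max (Real.exp 6 * lam ^ 2 * vol ^ 2) (Real.log (4 * ε⁻¹) ^ 2) ≤ n) :
    0 < n ∧ 3 * (lam * vol) ^ 2 ≤ ε ^ 2 * δ * n := by
  have hlog : 0 < Real.log (4 * ε⁻¹) := Real.log_pos (by linarith [(one_le_inv₀ hε).2 hε1])
  refine ⟨lt_of_lt_of_le (mul_pos (by positivity) (lt_max_of_lt_right (by positivity))) hn, ?_⟩
  calc 3 * (lam * vol) ^ 2 ≤ 4 * (Real.exp 6 * lam ^ 2 * vol ^ 2) := by
        nlinarith [Real.one_le_exp (show (0 : ℝ) ≤ 6 by norm_num), sq_nonneg (lam * vol)]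
    _ ≤ 4 * max (Real.exp 6 * lam ^ 2 * vol ^ 2) (Real.log (4 * ε⁻¹) ^ 2) := by
        gcongr
        exact le_max_left _ _
    _ = ε ^ 2 * δ * (4 * ε⁻¹ ^ 2 * δ⁻¹ *
          max (Real.exp 6 * lam ^ 2 * vol ^ 2) (Real.log (4 * ε⁻¹) ^ 2)) := by
        field_simp
    _ ≤ ε ^ 2 * δ * n := by gcongr

lemma restrict_eq_measure_smul_of_eq_inv_smul {X : Type*} [MeasurableSpace X] {ν μ : Measure X}
    {V : Set X} (hV0 : ν V ≠ 0) (hV : ν V ≠ ⊤) (hμ : μ = (ν V)⁻¹ • ν.restrict V) :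
    ν.restrict V = ν V • μ := by
  rw [hμ, smul_smul, ENNReal.mul_inv_cancel hV0 hV, one_smul]

theorem hcZrand_concentration_around_gppXi_general {X : Type*} [MeasurableSpace X]
    {ν : Measure X} {V : Set X} [Fact (ν V < ⊤)] {φ : X → X → ℝ}
    (hφm : Measurable (Function.uncurry φ)) (hφ0 : ∀ x y, 0 ≤ φ x y) {lam : ℝ} (hlam : 0 ≤ lam)
    {μ : Measure X} [IsProbabilityMeasure μ] (hμ : ν.restrict V = ν V • μ)
    {ε : ℝ} (hε : 0 < ε) {n : ℕ} (hn : 0 < n) :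
    randomGraphLaw μ (Fin n) {ω | ε * gppXi ν V φ lam
          ≤ |hcZrand φ (lam * (ν V).toReal / n) ω - gppXi ν V φ lam|}
      ≤ ENNReal.ofReal ((Real.exp ((lam * (ν V).toReal) ^ 2 / n) - 1
          + ((lam * (ν V).toReal) ^ 2 / n) ^ 2) / ε ^ 2) := by
  have hΞ : 0 < gppXi ν V φ lam := one_pos.trans_le (one_le_gppXi hφm hφ0 hlam hμ)
  refine (measure_le_abs_sub_le_ofReal (memLp_hcZrand hφm _ 2 _) _ (mul_pos hε hΞ)).trans
    (ENNReal.ofReal_le_ofReal ?_)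
  rw [div_le_iff₀ (by positivity), mul_pow ε, ← mul_assoc, div_mul_cancel₀ _ (by positivity)]
  exact variance_hcZrand_add_sq_le hφm hφ0 hlam hμ hn

/-- Concentration of the hard-core partition function of the geometric random graph
`G ~ D_n(V, φ)` around the Gibbs point process partition function `Ξ(V, λ, φ)`: for
`n ≥ 4 ε⁻² δ⁻¹ max{e⁶ λ² Vol², ln(4 ε⁻¹)²}`,
`Pr[|Z_G(λ Vol / n) − Ξ| ≥ ε Ξ] ≤ δ`. -/
theorem hcZrand_concentration_around_gppXi {X : Type*} [MeasurableSpace X]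
    (ν : Measure X) (V : Set X) (hV : MeasurableSet V)
    [Fact (ν V < ⊤)] (hV0 : ν V ≠ 0)
    (φ : X → X → ℝ) (hφm : Measurable (Function.uncurry φ))
    (hφ0 : ∀ x y, 0 ≤ φ x y) (hφsym : ∀ x y, φ x y = φ y x)
    (lam : ℝ) (hlam : 0 ≤ lam)
    (μ : Measure X) [IsProbabilityMeasure μ] (hμ : μ = (ν V)⁻¹ • ν.restrict V)
    (u : Measure ℝ) [IsProbabilityMeasure u] (hu : u = volume.restrict (Set.Icc (0:ℝ) 1))
    (ε δ : ℝ) (hε : 0 < ε) (hε1 : ε ≤ 1) (hδ : 0 < δ) (hδ1 : δ ≤ 1) (n : ℕ)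
    (hn : 4 * ε⁻¹ ^ 2 * δ⁻¹ * max (Real.exp 6 * lam ^ 2 * (ν V).toReal ^ 2)
        ((Real.log (4 * ε⁻¹)) ^ 2) ≤ n) :
    ((Measure.pi fun _ : Fin n => μ).prod (Measure.pi fun _ : Fin n × Fin n => u))
      {ω | ε * gppXi ν V φ lam
            ≤ |hcZrand φ (lam * (ν V).toReal / n) ω - gppXi ν V φ lam|}
      ≤ ENNReal.ofReal δ := by
  subst hu
  obtain ⟨hn0, hn3⟩ := pos_and_three_mul_sq_le_of_four_mul_max_le hε hε1 hδ hn
  have hμ' := restrict_eq_measure_smul_of_eq_inv_smul hV0 (Fact.out : ν V < ⊤).ne hμ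
  exact (hcZrand_concentration_around_gppXi_general hφm hφ0 hlam hμ' hε (Nat.cast_pos.1 hn0)).trans
    (ENNReal.ofReal_le_ofReal (exp_sq_div_sub_one_add_sq_div_le hn0 hε hε1 hδ1 hn3))
end
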